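/- Let C > 0 and let f : ℝ → ℝ be continuous on [0, 1], nonnegative on [0, 1], and differentiable on (0, 1) with derivative satisfying f'(t) ≤ C − f(t)²/C for all t ∈ (0, 1). Then for all t ∈ (0, 1], f(t) ≤ C + C/t. -/

import Mathlib

theorem ode_comparison (C : ℝ) (hC : 0 < C) (f : ℝ → ℝ)
    (hcont : ContinuousOn f (Set.Icc 0 1))
    (hnonneg : ∀ t ∈ Set.Icc (0:ℝ) 1, 0 ≤ f t)
    (hdiff : ∀ t ∈ Set.Ioo (0:ℝ) 1, DifferentiableAt ℝ f t)
    (hderiv : ∀ t ∈ Set.Ioo (0:ℝ) 1, deriv f t ≤ C - (f t) ^ 2 / C) :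
    ∀ t ∈ Set.Ioc (0:ℝ) 1, f t ≤ C + C / t := by
  intro t ht
  obtain ⟨ht0, ht1⟩ := ht
  have hc : ContinuousOn (fun s => s * (f s - C) - C) (Set.Icc 0 1) := by fun_prop
  have h0 : ∀ᶠ s in nhdsWithin (0:ℝ) (Set.Ioo 0 t), s * (f s - C) - C < 0 := by
    have h1 := (hc 0 (by simp)).mono
      (fun x hx => ⟨hx.1.le, hx.2.le.trans ht1⟩ : Set.Ioo 0 t ⊆ Set.Icc 0 1)
    exact h1.eventually (gt_mem_nhds (by simpa using hC))
  have hne : (nhdsWithin (0:ℝ) (Set.Ioo 0 t)).NeBot := by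
    rw [nhdsWithin_Ioo_eq_nhdsGT ht0]; infer_instance
  obtain ⟨d, hd, hd0, hdt⟩ := (h0.and self_mem_nhdsWithin).exists
  have key := image_le_of_deriv_right_lt_deriv_boundary
    (f := fun s => s * (f s - C) - C) (a := d) (b := t)
    (f' := fun s => (1 * (f s - C) + s * deriv f s)) (B := fun _ => 0) (B' := fun _ => 0)
    (hc.mono (Set.Icc_subset_Icc hd0.le ht1))
    (fun x hx => by
      have hf := (hdiff x ⟨hd0.trans_le hx.1, hx.2.trans_le ht1⟩).hasDerivAt
      exact (((hasDerivAt_id x).mul (hf.sub_const C)).sub_const C).hasDerivWithinAt)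
    hd.le (fun x => hasDerivAt_const x 0)
    (fun x hx he => by
      have hx0 : 0 < x := hd0.trans_le hx.1
      have hD := hderiv x ⟨hx0, hx.2.trans_le ht1⟩
      have he' : x * (f x - C) = C := by linarith
      have hp : 0 < f x - C := by
        by_contra hn
        nlinarith
      have h2 : x * deriv f x ≤ x * (C - (f x)^2 / C) := by gcongr
      have h3 : x * (C - (f x)^2 / C) = -(f x + C) := by
        field_simp
        linear_combination (-(f x + C)) * he'
      show 1 * (f x - C) + x * deriv f x < 0
      linarith)
    (Set.right_mem_Icc.2 hdt.le)
  have key' : t * (f t - C) - C ≤ 0 := key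
  have : f t - C ≤ C / t := by
    rw [le_div_iff₀ ht0]; linarith
  linarith
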